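/- Let Π = G ∗_A G' be the amalgamated free product of groups G and G' over a common subgroup A (the pushout of two injective group homomorphisms A → G and A → G'), where A is a proper subgroup of G and a proper subgroup of G' (neither inclusion is surjective). If the image of A is an RS-subgroup of G or the image of A is an RS-subgroup of G', then Π is a cut-group. -/

import Mathlib

/-- A group `G` is a *cut-group* if every central unit of the integral group ring `ℤ[G]`
is trivial, i.e. of the form `±g` for some `g ∈ G`. -/
def IsCutGroup (G : Type*) [Group G] : Prop :=
  ∀ u : (MonoidAlgebra ℤ G)ˣ,
    (u : MonoidAlgebra ℤ G) ∈ Subring.center (MonoidAlgebra ℤ G) →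
    ∃ g : G, (u : MonoidAlgebra ℤ G) = MonoidAlgebra.of ℤ G g ∨
      (u : MonoidAlgebra ℤ G) = -(MonoidAlgebra.of ℤ G g)

/-- A torsion element `x` of a group `G` is an *RS-element* of `G` if for every positive
integer `j` coprime to the order of `x`, `x ^ j` is conjugate in `G` to `x` or to `x⁻¹`. -/
def IsRSElement {G : Type*} [Group G] (x : G) : Prop :=
  ∀ j : ℕ, 0 < j → Nat.Coprime j (orderOf x) → (IsConj (x ^ j) x ∨ IsConj (x ^ j) x⁻¹)

/-- A subgroup `A` of `G` is an *RS-subgroup* of `G` if every torsion element of `A`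
is an RS-element of `G`. -/
def IsRSSubgroup {G : Type*} [Group G] (A : Subgroup G) : Prop :=
  ∀ a ∈ A, IsOfFinOrder a → IsRSElement a

section
open MonoidAlgebra

namespace CutAux

/-- The classical involution of the integral group ring. -/
noncomputable def st {G : Type*} [Group G] (x : MonoidAlgebra ℤ G) : MonoidAlgebra ℤ G :=
  ofCoeff (Finsupp.equivMapDomain (Equiv.inv G) x.coeff)

section star
variable {G : Type*} [Group G]

lemma st_coeff (x : MonoidAlgebra ℤ G) (g : G) : (st x).coeff g = x.coeff g⁻¹ := by
  simp [st]

lemma st_add (x y : MonoidAlgebra ℤ G) : st (x + y) = st x + st y := by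
  ext g; simp [st_coeff]

lemma st_sub (x y : MonoidAlgebra ℤ G) : st (x - y) = st x - st y := by
  ext g; simp [st_coeff]

lemma st_zero : st (0 : MonoidAlgebra ℤ G) = 0 := by
  ext g; simp [st_coeff]

lemma st_single (g : G) (r : ℤ) : st (single g r) = single g⁻¹ r := by
  classical
  ext h
  simp only [st_coeff, coeff_single, Finsupp.single_apply]
  refine if_congr ?_ rfl rfl
  exact eq_inv_iff_mul_eq_one.trans (by rw [inv_eq_iff_mul_eq_one])

lemma st_one : st (1 : MonoidAlgebra ℤ G) = 1 := by
  rw [one_def, st_single, inv_one]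

lemma st_st (x : MonoidAlgebra ℤ G) : st (st x) = x := by
  ext g; simp [st_coeff]

lemma st_mul (x y : MonoidAlgebra ℤ G) : st (x * y) = st y * st x := by
  induction x using MonoidAlgebra.induction_linear with
  | zero => simp [st_zero]
  | add a b ha hb => simp [add_mul, mul_add, st_add, ha, hb]
  | single g r =>
    induction y using MonoidAlgebra.induction_linear with
    | zero => simp [st_zero]
    | add a b ha hb => simp [add_mul, mul_add, st_add, ha, hb]
    | single h s => simp [st_single, single_mul_single, mul_comm]

lemma mul_st_coeff_one (x : MonoidAlgebra ℤ G) :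
    (x * st x).coeff 1 = ∑ g ∈ x.coeff.support, x.coeff g ^ 2 := by
  rw [coeff_mul_apply_left, Finsupp.sum]
  refine Finset.sum_congr rfl fun g _ => ?_
  simp [st_coeff, sq]

lemma eq_zero_of_mul_st {x : MonoidAlgebra ℤ G} (h : x * st x = 0) : x = 0 := by
  have h1 := mul_st_coeff_one x
  rw [h] at h1
  by_contra hx
  have : x.coeff.support.Nonempty := by
    rw [Finsupp.support_nonempty_iff]; simpa using hx
  have h2 : 0 < ∑ g ∈ x.coeff.support, x.coeff g ^ 2 :=
    Finset.sum_pos (fun g hg => by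
      have : x.coeff g ≠ 0 := by simpa using hg
      positivity) this
  simp at h1
  omega

lemma trivial_of_mul_st {x : MonoidAlgebra ℤ G} (h : x * st x = 1) :
    ∃ g : G, x = of ℤ G g ∨ x = - of ℤ G g := by
  have h1 := mul_st_coeff_one x
  rw [h, coeff_one_one] at h1
  have hne : x.coeff.support.Nonempty := by
    by_contra hne
    rw [Finset.not_nonempty_iff_eq_empty] at hne
    rw [hne] at h1; simp at h1
  obtain ⟨g, hg⟩ := hne
  have hpos : ∀ k ∈ x.coeff.support, 0 < x.coeff k ^ 2 := fun k hk => by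
    have : x.coeff k ≠ 0 := by simpa using hk
    positivity
  have hsub : x.coeff.support = {g} := by
    classical
    refine Finset.eq_singleton_iff_unique_mem.2 ⟨hg, fun k hk => ?_⟩
    by_contra hkg
    have h2 : ∑ g ∈ {g, k}, x.coeff g ^ 2 ≤ ∑ g ∈ x.coeff.support, x.coeff g ^ 2 :=
      Finset.sum_le_sum_of_subset_of_nonneg (by
        intro a ha; simp only [Finset.mem_insert, Finset.mem_singleton] at ha
        rcases ha with rfl | rfl <;> assumption) (fun _ _ _ => sq_nonneg _)
    rw [Finset.sum_pair (Ne.symm hkg)] at h2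
    have := hpos g hg; have := hpos k hk
    omega
  rw [hsub, Finset.sum_singleton] at h1
  have hx : x = single g (x.coeff g) := by
    ext k
    by_cases hk : k = g
    · subst hk; simp
    · have : k ∉ x.coeff.support := by rw [hsub]; simpa using hk
      rw [Finsupp.notMem_support_iff] at this
      rw [this]; simp [Ne.symm hk]
  refine ⟨g, ?_⟩
  have h3 : (x.coeff g - 1) * (x.coeff g + 1) = 0 := by linarith
  have h4 : x.coeff g = 1 ∨ x.coeff g = -1 := by
    rcases mul_eq_zero.1 h3 with h | h
    · left; omega
    · right; omega
  rcases h4 with h | h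
  · left; rw [hx, h]; rfl
  · right; rw [hx, h]; simp [of_apply]

end star
end CutAux
end

section
open MonoidAlgebra

namespace CutAux

section units

lemma coeff_mul_coeff_of_unit {D L : Type*} [CommRing D] [IsDomain D] [CommGroup L]
    [TwoUniqueProds L] {x y : MonoidAlgebra D L} (h : x * y = 1) {a b : L} (hab : a ≠ b) :
    x.coeff a * x.coeff b = 0 := by
  classical
  by_contra hne
  have ha : a ∈ x.coeff.support := by
    rw [Finsupp.mem_support_iff]; exact left_ne_zero_of_mul hne
  have hb : b ∈ x.coeff.support := by
    rw [Finsupp.mem_support_iff]; exact right_ne_zero_of_mul hne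
  have hx : 1 < x.coeff.support.card := Finset.one_lt_card.2 ⟨a, ha, b, hb, hab⟩
  have hy : 0 < y.coeff.support.card := by
    rw [Finset.card_pos, Finsupp.support_nonempty_iff]
    intro hy
    have : y = 0 := by simpa using hy
    rw [this, mul_zero] at h
    exact zero_ne_one h
  obtain ⟨p, hp, q, hq, hpq, hup, huq⟩ := TwoUniqueProds.uniqueMul_of_one_lt_card
    (A := x.coeff.support) (B := y.coeff.support) (by nlinarith)
  have key : ∀ p ∈ x.coeff.support ×ˢ y.coeff.support,
      UniqueMul x.coeff.support y.coeff.support p.1 p.2 → p.1 * p.2 = 1 := by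
    intro p hp hu
    rw [Finset.mem_product, Finsupp.mem_support_iff, Finsupp.mem_support_iff] at hp
    have h1 := coeff_mul_mul_of_uniqueMul hu
    rw [h, one_def, coeff_single, Finsupp.single_apply] at h1
    by_contra h2
    rw [if_neg (Ne.symm h2)] at h1
    exact mul_ne_zero hp.1 hp.2 h1.symm
  have h1 := key p hp hup
  have h2 := key q hq huq
  rw [Finset.mem_product] at hq
  obtain ⟨h3, h4⟩ := hup hq.1 hq.2 (h2.trans h1.symm)
  exact hpq (Prod.ext h3.symm h4.symm)

lemma coeff_mul_coeff_of_unit_reduced {Z L : Type*} [CommRing Z] [IsReduced Z] [CommGroup L]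
    [TwoUniqueProds L] {x y : MonoidAlgebra Z L} (h : x * y = 1) {a b : L} (hab : a ≠ b) :
    x.coeff a * x.coeff b = 0 := by
  rw [← isNilpotent_iff_eq_zero, nilpotent_iff_mem_prime]
  intro J hJ
  have h1 : mapRingHom L (Ideal.Quotient.mk J) x * mapRingHom L (Ideal.Quotient.mk J) y = 1 := by
    rw [← map_mul, h, map_one]
  have h2 := coeff_mul_coeff_of_unit h1 hab
  rw [← Ideal.Quotient.eq_zero_iff_mem, map_mul]
  simpa using h2

end units

section coaction
variable {N L : Type*} [Group N] [CommGroup L] (φ : N →* L)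

/-- The coaction `g ↦ g ⊗ φ g`. -/
noncomputable def coact : MonoidAlgebra ℤ N →ₐ[ℤ] MonoidAlgebra (MonoidAlgebra ℤ N) L :=
  lift ℤ (MonoidAlgebra (MonoidAlgebra ℤ N) L) N
    { toFun := fun g => single (φ g) (single g 1)
      map_one' := by simp [one_def]
      map_mul' := fun a b => by simp [single_mul_single] }

lemma coact_single (g : N) (r : ℤ) : coact φ (single g r) = single (φ g) (single g r) := by
  simp [coact, smul_single]

open Classical in
lemma coact_coeff_coeff (x : MonoidAlgebra ℤ N) (a : L) (g : N) :
    ((coact φ x).coeff a).coeff g = if φ g = a then x.coeff g else 0 := by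
  induction x using MonoidAlgebra.induction_linear with
  | zero => simp
  | add x y hx hy =>
    rw [map_add, coeff_add, Finsupp.add_apply, coeff_add, Finsupp.add_apply, hx, hy]
    split_ifs <;> simp
  | single h r =>
    rw [coact_single, coeff_single, Finsupp.single_apply]
    by_cases hg : h = g
    · subst hg; split_ifs <;> simp
    · split_ifs <;> simp [hg]

lemma mem_center_iff {x : MonoidAlgebra ℤ N} :
    x ∈ Subring.center (MonoidAlgebra ℤ N) ↔ ∀ g h, x.coeff (h * g * h⁻¹) = x.coeff g := by
  rw [Subring.mem_center_iff]
  constructor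
  · intro hx g h
    have h1 := congrArg (fun y => y.coeff (h * g)) (hx (single h 1))
    simp only [coeff_single_mul_apply, coeff_mul_single_apply] at h1
    simpa using h1.symm
  · intro hx y
    induction y using MonoidAlgebra.induction_linear with
    | zero => simp
    | add a b ha hb => simp [add_mul, mul_add, ha, hb]
    | single h r =>
      ext g
      simp only [coeff_single_mul_apply, coeff_mul_single_apply]
      rw [mul_comm, ← hx (h⁻¹ * g) h]
      simp

lemma st_mem_center {x : MonoidAlgebra ℤ N} (hx : x ∈ Subring.center (MonoidAlgebra ℤ N)) :
    st x ∈ Subring.center (MonoidAlgebra ℤ N) := by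
  rw [mem_center_iff] at *
  intro g h
  rw [st_coeff, st_coeff, ← hx g⁻¹ h]
  congr 1; group

lemma coact_coeff_mem_center {x : MonoidAlgebra ℤ N}
    (hx : x ∈ Subring.center (MonoidAlgebra ℤ N)) (a : L) :
    (coact φ x).coeff a ∈ Subring.center (MonoidAlgebra ℤ N) := by
  classical
  rw [mem_center_iff] at *
  intro g h
  rw [coact_coeff_coeff, coact_coeff_coeff, hx]
  simp

instance : IsReduced (Subring.center (MonoidAlgebra ℤ N)) := by
  rw [isReduced_iff_pow_one_lt 2 one_lt_two]
  rintro ⟨z, hz⟩ h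
  have h1 : z * z = 0 := by
    have := congrArg Subtype.val h
    simpa [sq] using this
  have hc := Subring.mem_center_iff.1 hz
  have h2 : z * st z = 0 := by
    apply eq_zero_of_mul_st
    rw [st_mul, st_st, mul_assoc, ← mul_assoc (st z), hc (st z), ← mul_assoc, ← mul_assoc, h1]
    simp
  exact Subtype.ext (eq_zero_of_mul_st h2)

open Classical in
/-- Lift of the coaction to the center. -/
noncomputable def coactZ (x : MonoidAlgebra ℤ N) :
    MonoidAlgebra (Subring.center (MonoidAlgebra ℤ N)) L :=
  ofCoeff ((coact φ x).coeff.mapRange (fun z => if h : z ∈ Subring.center (MonoidAlgebra ℤ N)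
    then ⟨z, h⟩ else 0) (by simp))

lemma coactZ_coeff {x : MonoidAlgebra ℤ N}
    (hx : x ∈ Subring.center (MonoidAlgebra ℤ N)) (a : L) :
    ((coactZ φ x).coeff a : MonoidAlgebra ℤ N) = (coact φ x).coeff a := by
  simp [coactZ, coact_coeff_mem_center φ hx a]

lemma map_coactZ {x : MonoidAlgebra ℤ N}
    (hx : x ∈ Subring.center (MonoidAlgebra ℤ N)) :
    mapRingHom L (Subring.center (MonoidAlgebra ℤ N)).subtype (coactZ φ x) = coact φ x := by
  apply coeff_injective
  apply Finsupp.ext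
  intro a
  simp [← coactZ_coeff φ hx]

lemma coact_mul_coact [TwoUniqueProds L] {x y : MonoidAlgebra ℤ N}
    (hx : x ∈ Subring.center (MonoidAlgebra ℤ N)) (hy : y ∈ Subring.center (MonoidAlgebra ℤ N))
    (h : x * y = 1) {a b : L} (hab : a ≠ b) :
    (coact φ x).coeff a * (coact φ x).coeff b = 0 := by
  have h1 : coactZ φ x * coactZ φ y = 1 := by
    have hinj : Function.Injective
        (mapRingHom L (Subring.center (MonoidAlgebra ℤ N)).subtype) := by
      intro p q hpq
      apply coeff_injective
      apply Finsupp.ext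
      intro a
      have := congrArg (fun z => z.coeff a) hpq
      simpa using this
    apply hinj
    rw [map_mul, map_coactZ φ hx, map_coactZ φ hy, ← map_mul, h, map_one, map_one]
  have h2 := coeff_mul_coeff_of_unit_reduced h1 hab
  rw [← coactZ_coeff φ hx, ← coactZ_coeff φ hx]
  have := congrArg Subtype.val h2
  simpa using this

lemma coact_st (x : MonoidAlgebra ℤ N) (a : L) :
    (coact φ (st x)).coeff a = st ((coact φ x).coeff a⁻¹) := by
  classical
  ext g
  simp only [coact_coeff_coeff, st_coeff, map_inv, inv_inj]

lemma mul_st_coeff_eq_zero [TwoUniqueProds L] {x y : MonoidAlgebra ℤ N}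
    (hx : x ∈ Subring.center (MonoidAlgebra ℤ N)) (hy : y ∈ Subring.center (MonoidAlgebra ℤ N))
    (h : x * y = 1) {g : N} (hg : φ g ≠ 1) : (x * st x).coeff g = 0 := by
  classical
  have h1 : (coact φ (x * st x)).coeff (φ g) = 0 := by
    rw [map_mul, coeff_mul_apply_left, Finsupp.sum]
    refine Finset.sum_eq_zero fun a _ => ?_
    rw [coact_st]
    set p := (coact φ x).coeff a with hp
    set q := (coact φ x).coeff (a⁻¹ * φ g)⁻¹ with hq
    have hpq : p * q = 0 := coact_mul_coact φ hx hy h (by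
      intro h; apply hg
      rw [mul_inv_rev, inv_inv] at h
      simpa using h)
    have hpc := Subring.mem_center_iff.1 (coact_coeff_mem_center φ hx a)
    have hqc := Subring.mem_center_iff.1 (coact_coeff_mem_center φ hx (a⁻¹ * φ g)⁻¹)
    rw [← hp] at hpc
    rw [← hq] at hqc
    apply eq_zero_of_mul_st
    rw [st_mul, st_st, ← mul_assoc, mul_assoc p, hqc (st q), ← mul_assoc, hpq]
    simp
  have := congrArg (fun z => z.coeff g) h1
  simpa only [coact_coeff_coeff, if_true, coeff_zero, Finsupp.zero_apply] using this

end coaction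

end CutAux
end

section
open MonoidAlgebra
open scoped commutatorElement

namespace CutAux

section fc
variable {Γ : Type*} [Group Γ]

lemma finite_commutator_of_center (N : Type*) [Group N] [(Subgroup.center N).FiniteIndex] :
    Finite (commutator N) := by
  have : Finite (commutatorSet N) := by
    refine (Set.Finite.subset (Set.finite_range
      (fun p : (N ⧸ Subgroup.center N) × (N ⧸ Subgroup.center N) => ⁅p.1.out, p.2.out⁆)) ?_).to_subtype
    rintro _ ⟨x, y, rfl⟩
    refine ⟨(x, y), ?_⟩
    obtain ⟨z, hz⟩ := QuotientGroup.mk_out_eq_mul (Subgroup.center N) x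
    obtain ⟨w, hw⟩ := QuotientGroup.mk_out_eq_mul (Subgroup.center N) y
    have hz' := Subgroup.mem_center_iff.1 z.2
    have hw' := Subgroup.mem_center_iff.1 w.2
    simp only [hz, hw, commutatorElement_def, mul_inv_rev]
    have e1 : ∀ g : N, (z : N)⁻¹ * g = g * (z : N)⁻¹ := fun g =>
      (Subgroup.mem_center_iff.1 (inv_mem z.2) g).symm
    have e2 : ∀ g : N, (w : N)⁻¹ * g = g * (w : N)⁻¹ := fun g =>
      (Subgroup.mem_center_iff.1 (inv_mem w.2) g).symm
    rw [e1, e2]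
    calc x * z * (y * w) * (x⁻¹ * (z:N)⁻¹) * (y⁻¹ * (w:N)⁻¹)
        = x * (z * y) * (w * x⁻¹) * ((z:N)⁻¹ * y⁻¹) * (w:N)⁻¹ := by group
      _ = _ := by rw [← hz' y, ← hw' x⁻¹, e1]; 
                  calc _ = x * y * (z * x⁻¹) * (w * y⁻¹) * (z : N)⁻¹ * (w:N)⁻¹ := by group
                    _ = x * y * x⁻¹ * (z * y⁻¹) * w * (z : N)⁻¹ * (w:N)⁻¹ := by
                      rw [← hz', ← hw']; group
                    _ = x * y * x⁻¹ * y⁻¹ * (z * w) * (z : N)⁻¹ * (w:N)⁻¹ := by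
                      rw [← hz']; group
                    _ = _ := by rw [← hz']; group
  infer_instance

lemma finiteIndex_center_closure {S : Set Γ} (hS : S.Finite)
    (hfc : ∀ s ∈ S, (Set.range fun h : Γ => h * s * h⁻¹).Finite) :
    (Subgroup.center (Subgroup.closure S)).FiniteIndex := by
  have h1 : ∀ s ∈ S, (Subgroup.centralizer ({s} : Set Γ)).FiniteIndex := by
    intro s hs
    have : Finite (Set.range fun h : Γ => h * s * h⁻¹) := hfc s hs
    rw [Subgroup.finiteIndex_iff_finite_quotient]
    refine Finite.of_injective (β := Set.range fun h : Γ => h * s * h⁻¹)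
      (fun q => ⟨q.out * s * q.out⁻¹, q.out, rfl⟩) ?_
    intro p q hpq
    have h0 : p.out * s * p.out⁻¹ = q.out * s * q.out⁻¹ := congrArg Subtype.val hpq
    rw [← QuotientGroup.out_eq' p, ← QuotientGroup.out_eq' q, QuotientGroup.eq,
      Subgroup.mem_centralizer_singleton_iff]
    calc p.out⁻¹ * q.out * s = p.out⁻¹ * (q.out * s * q.out⁻¹) * q.out := by group
      _ = s * (p.out⁻¹ * q.out) := by rw [← h0]; group
  have : Finite S := hS
  have h2 : (⨅ s : S, Subgroup.centralizer ({(s : Γ)} : Set Γ)).FiniteIndex :=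
    Subgroup.finiteIndex_iInf fun s => h1 s s.2
  have h3 : ((⨅ s : S, Subgroup.centralizer ({(s : Γ)} : Set Γ)).subgroupOf
    (Subgroup.closure S)).FiniteIndex := inferInstance
  refine Subgroup.finiteIndex_of_le (H := (⨅ s : S, Subgroup.centralizer ({(s : Γ)} : Set Γ)).subgroupOf
    (Subgroup.closure S)) ?_
  intro x hx
  rw [Subgroup.mem_subgroupOf, Subgroup.mem_iInf] at hx
  have h4 : Subgroup.closure S ≤ Subgroup.centralizer {(x : Γ)} := by
    rw [Subgroup.closure_le]
    intro s hs
    have := hx ⟨s, hs⟩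
    rw [Subgroup.mem_centralizer_singleton_iff] at this
    rw [SetLike.mem_coe, Subgroup.mem_centralizer_singleton_iff]
    exact this.symm
  rw [Subgroup.mem_center_iff]
  intro g
  have := h4 g.2
  rw [Subgroup.mem_centralizer_singleton_iff] at this
  exact Subtype.ext this

lemma finite_commutator_closure {S : Set Γ} (hS : S.Finite)
    (hfc : ∀ s ∈ S, (Set.range fun h : Γ => h * s * h⁻¹).Finite) :
    Finite (commutator (Subgroup.closure S)) := by
  have := finiteIndex_center_closure hS hfc
  exact finite_commutator_of_center _

/-- Dietzmann's lemma. -/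
lemma finite_closure {S : Set Γ} (hS : S.Finite)
    (hfc : ∀ s ∈ S, (Set.range fun h : Γ => h * s * h⁻¹).Finite) (ht : ∀ s ∈ S, IsOfFinOrder s) :
    Finite (Subgroup.closure S) := by
  have h1 := finite_commutator_closure hS hfc
  have hfg : Group.FG (Subgroup.closure S) := by
    have : Finite S := hS
    exact Group.closure_finite_fg S
  have h2 : Finite (Abelianization (Subgroup.closure S)) := by
    have : Group.FG (Abelianization (Subgroup.closure S)) := QuotientGroup.fg _
    apply CommGroup.finite_of_fg_isMulTorsion
    have h3 : (CommGroup.torsion (Abelianization (Subgroup.closure S))) = ⊤ := by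
      rw [eq_top_iff]
      have : (CommGroup.torsion (Abelianization (Subgroup.closure S))).comap Abelianization.of = ⊤ := by
        rw [eq_top_iff, ← Subgroup.closure_closure_coe_preimage, Subgroup.closure_le]
        intro s hs
        have h5 : IsOfFinOrder s := by
          have := ht _ hs
          exact (Submonoid.isOfFinOrder_coe).1 this
        exact MonoidHom.isOfFinOrder _ h5
      intro x _
      obtain ⟨y, rfl⟩ := QuotientGroup.mk_surjective x
      have : y ∈ (CommGroup.torsion (Abelianization (Subgroup.closure S))).comap Abelianization.of := by
        rw [this]; trivial
      exact this
    intro x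
    have : x ∈ (CommGroup.torsion (Abelianization (Subgroup.closure S))) := by rw [h3]; trivial
    exact this
  have : Finite ((Subgroup.closure S) ⧸ commutator (Subgroup.closure S)) := h2
  exact Finite.of_equiv _ (Subgroup.groupEquivQuotientProdSubgroup
    (s := commutator (Subgroup.closure S))).symm

lemma mul_st_coeff_of_not_torsion {N : Type*} [Group N] [Group.FG N] [Finite (commutator N)]
    {x y : MonoidAlgebra ℤ N}
    (hx : x ∈ Subring.center (MonoidAlgebra ℤ N)) (hy : y ∈ Subring.center (MonoidAlgebra ℤ N))
    (h : x * y = 1) {g : N} (hg : ¬ IsOfFinOrder g) : (x * st x).coeff g = 0 := by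
  let L := Abelianization N ⧸ CommGroup.torsion (Abelianization N)
  let φ : N →* L := (QuotientGroup.mk' _).comp Abelianization.of
  have : IsMulTorsionFree L := inferInstance
  have : Monoid.FG L := by
    have : Group.FG (Abelianization N) := QuotientGroup.fg _
    have : Group.FG L := QuotientGroup.fg _
    exact Group.fg_iff_monoid_fg.1 this
  have : TwoUniqueProds L := inferInstance
  refine mul_st_coeff_eq_zero φ hx hy h (g := g) fun h1 => hg ?_
  have h2 : Abelianization.of g ∈ CommGroup.torsion (Abelianization N) :=
    (QuotientGroup.eq_one_iff _).1 h1
  obtain ⟨n, hn, h3⟩ := isOfFinOrder_iff_pow_eq_one.1 (show IsOfFinOrder (Abelianization.of g) from h2)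
  have h4 : g ^ n ∈ commutator N := by
    rw [← map_pow] at h3
    exact (QuotientGroup.eq_one_iff _).1 h3
  have h5 : IsOfFinOrder (g ^ n) := by
    have := isOfFinOrder_of_finite (⟨g ^ n, h4⟩ : commutator N)
    exact Submonoid.isOfFinOrder_coe.2 this
  exact (isOfFinOrder_pow.1 h5).resolve_right (by omega)

end fc
end CutAux
end

section
open MonoidAlgebra

namespace CutAux

section trace
variable {K V : Type*} [Field K] [IsAlgClosed K] [CharZero K] [AddCommGroup V] [Module K V]
  [FiniteDimensional K V]

open Classical in
lemma isInternal_eigenspace {n : ℕ} (hn : 0 < n) (g : Module.End K V) (hg : g ^ n = 1) :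
    DirectSum.IsInternal g.eigenspace := by
  have hss : g.IsSemisimple := by
    refine Module.End.isSemisimple_of_squarefree_aeval_eq_zero
      (p := (Polynomial.X ^ n - 1 : Polynomial K)) ?_ (by simp [hg])
    have : (Polynomial.X ^ n - 1 : Polynomial K).Separable :=
      Polynomial.separable_X_pow_sub_C (1 : K) (by exact_mod_cast hn.ne') one_ne_zero
    exact this.squarefree
  have hfs := hss.isFinitelySemisimple
  refine DirectSum.isInternal_submodule_of_iSupIndep_of_iSup_eq_top
    (Module.End.eigenspaces_iSupIndep g) ?_
  rw [← Module.End.iSup_maxGenEigenspace_eq_top g]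
  exact iSup_congr fun μ => (hfs.maxGenEigenspace_eq_eigenspace μ).symm

lemma trace_pow_eq {n : ℕ} (hn : 0 < n) (g : Module.End K V) (hg : g ^ n = 1) (j : ℕ) :
    LinearMap.trace K V (g ^ j) =
      ∑ μ ∈ (Module.End.finite_hasEigenvalue g).toFinset,
        μ ^ j * (Module.finrank K (g.eigenspace μ) : K) := by
  classical
  have hm : ∀ μ, Set.MapsTo (g ^ j) (g.eigenspace μ) (g.eigenspace μ) := by
    intro μ
    exact Module.End.mapsTo_genEigenspace_of_comm ((Commute.refl g).pow_right j) μ 1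
  have hfin : {μ | g.eigenspace μ ≠ ⊥}.Finite := Module.End.finite_hasEigenvalue g
  rw [LinearMap.trace_eq_sum_trace_restrict' (isInternal_eigenspace hn g hg) hfin hm]
  refine Finset.sum_congr rfl fun μ _ => ?_
  have : (g ^ j).restrict (hm μ) = μ ^ j • LinearMap.id := by
    ext ⟨x, hx⟩
    rw [Module.End.mem_eigenspace_iff] at hx
    have : ∀ j : ℕ, (g ^ j) x = μ ^ j • x := by
      intro j
      induction j with
      | zero => simp
      | succ j ih => rw [pow_succ', Module.End.mul_apply, ih, map_smul, hx, smul_smul, pow_succ]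
    exact this j
  rw [this, map_smul, LinearMap.trace_id, smul_eq_mul]

lemma map_trace (σ : K →+* K) {n j : ℕ} (hn : 0 < n) (hσ : ∀ ζ : K, ζ ^ n = 1 → σ ζ = ζ ^ j)
    (g : Module.End K V) (hg : g ^ n = 1) :
    σ (LinearMap.trace K V g) = LinearMap.trace K V (g ^ j) := by
  have h1 := trace_pow_eq hn g hg 1
  rw [pow_one] at h1
  rw [h1, trace_pow_eq hn g hg j, map_sum]
  refine Finset.sum_congr rfl fun μ hμ => ?_
  rw [map_mul, map_natCast, pow_one, hσ μ]
  rw [Set.Finite.mem_toFinset] at hμ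
  have hμ : g.HasEigenvalue μ := hμ
  obtain ⟨v, hv⟩ := hμ.exists_hasEigenvector
  have := hv.pow_apply n
  rw [hg] at this
  have h2 : (μ ^ n - 1) • v = 0 := by rw [sub_smul, ← this]; simp
  exact sub_eq_zero.1 ((smul_eq_zero.1 h2).resolve_right hv.2)

end trace

lemma exists_power (σ : AlgebraicClosure ℚ ≃ₐ[ℚ] AlgebraicClosure ℚ) (n : ℕ) (hn : 0 < n) :
    ∃ j : ℕ, j.Coprime n ∧ ∀ ζ : AlgebraicClosure ℚ, ζ ^ n = 1 → σ ζ = ζ ^ j := by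
  have : NeZero n := ⟨hn.ne'⟩
  obtain ⟨ζ, hζ⟩ := HasEnoughRootsOfUnity.exists_primitiveRoot (AlgebraicClosure ℚ) n
  have h1 : IsPrimitiveRoot (σ ζ) n := hζ.map_of_injective σ.injective
  obtain ⟨j, _, hj, h2⟩ := (hζ.isPrimitiveRoot_iff).1 h1
  refine ⟨j, hj, fun ξ hξ => ?_⟩
  obtain ⟨k, _, rfl⟩ := hζ.eq_pow_of_pow_eq_one hξ
  rw [map_pow, ← h2, ← pow_mul, ← pow_mul, mul_comm]

section finite
variable {T : Type*} [Group T] [Finite T]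

/-- The algebraic numbers. -/
abbrev QQ := AlgebraicClosure ℚ

/-- Eigenspaces of left multiplication. -/
noncomputable abbrev eig (a : MonoidAlgebra QQ T) (l : QQ) : Submodule QQ (MonoidAlgebra QQ T) :=
  Module.End.eigenspace (LinearMap.mulLeft QQ a) l

lemma isIntegral_groupRing (v : MonoidAlgebra ℤ T) : IsIntegral ℤ v := by
  have : Module.Finite ℤ (MonoidAlgebra ℤ T) := inferInstance
  exact IsIntegral.of_finite ℤ v

/-- If `v m = λ m` in a `QQ[T]` then `λ` is integral. -/
lemma isIntegral_eigen (v : MonoidAlgebra ℤ T) (l : QQ) (m : MonoidAlgebra QQ T) (hm : m ≠ 0)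
    (h : mapRingHom T (algebraMap ℤ QQ) v * m = l • m) : IsIntegral ℤ l := by
  obtain ⟨p, hp, h0⟩ := isIntegral_groupRing v
  refine ⟨p, hp, ?_⟩
  have key : ∀ p : Polynomial ℤ, mapRingHom T (algebraMap ℤ QQ) (Polynomial.aeval v p) * m =
      (Polynomial.aeval l p) • m := by
    intro p
    induction p using Polynomial.induction_on' with
    | add p q hp hq => simp only [map_add, add_mul, add_smul, hp, hq]
    | monomial k a =>
      have h1 : mapRingHom T (algebraMap ℤ QQ) v ^ k * m = l ^ k • m := by
        induction k with
        | zero => simp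
        | succ k ih =>
          rw [pow_succ', mul_assoc, ih, mul_smul_comm, h, smul_smul, pow_succ]
      rw [Polynomial.aeval_monomial, Polynomial.aeval_monomial, map_mul, map_pow, mul_assoc, h1]
      simp only [eq_intCast, map_intCast, ← zsmul_eq_mul, smul_assoc]
  have h1 := key p
  rw [Polynomial.aeval_def, h0, map_zero, zero_mul] at h1
  exact (smul_eq_zero.1 h1.symm).resolve_right hm

/-- the representation of `T` on the eigenspace of a central element. -/
noncomputable def eigRep (a : MonoidAlgebra QQ T) (ha : ∀ x, x * a = a * x) (l : QQ) :
    T →* Module.End QQ (eig a l) where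
  toFun t := (LinearMap.mulLeft QQ (single t 1)).restrict (p := eig a l)
    (q := eig a l) (by
      intro m hm
      rw [Module.End.mem_eigenspace_iff] at *
      simp only [LinearMap.mulLeft_apply] at *
      rw [← mul_assoc, ← ha, mul_assoc, hm, mul_smul_comm])
  map_one' := by
    ext m
    simp [← one_def]
  map_mul' s t := by
    apply LinearMap.ext
    intro m
    apply Subtype.ext
    simp [← mul_assoc, single_mul_single]

lemma trace_eigen (v : MonoidAlgebra ℤ T)
    (hv : ∀ x, x * mapRingHom T (algebraMap ℤ QQ) v = mapRingHom T (algebraMap ℤ QQ) v * x) (l : QQ) :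
    l * (Module.finrank QQ (eig (mapRingHom T (algebraMap ℤ QQ) v) l) : QQ) =
    v.coeff.sum fun t r => (r : QQ) * LinearMap.trace QQ _ (eigRep _ hv l t) := by
  have h1 : (v.coeff.sum fun t r => (r : QQ) • (eigRep _ hv l t)) = l • LinearMap.id := by
    apply LinearMap.ext
    intro m
    apply Subtype.ext
    have hm := m.2
    rw [Module.End.mem_eigenspace_iff, LinearMap.mulLeft_apply] at hm
    rw [LinearMap.smul_apply, LinearMap.id_apply, Submodule.coe_smul, ← hm]
    have h0 : ∀ m' : MonoidAlgebra QQ T, mapRingHom T (algebraMap ℤ QQ) v * m' =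
        ∑ t ∈ v.coeff.support, (v.coeff t : QQ) • (single t (1 : QQ) * m') := by
      intro m'
      conv_lhs => rw [← sum_coeff_single v]
      simp only [Finsupp.sum, map_sum, Finset.sum_mul]
      refine Finset.sum_congr rfl fun t _ => ?_
      have : mapRingHom T (algebraMap ℤ QQ) (single t (v.coeff t)) =
        (v.coeff t : QQ) • single t (1 : QQ) := by simp
      rw [this, smul_mul_assoc]
    rw [h0]
    simp only [Finsupp.sum, LinearMap.sum_apply, AddSubmonoidClass.coe_finset_sum]
    refine Finset.sum_congr rfl fun t _ => ?_
    rfl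
  have h2 := congrArg (LinearMap.trace QQ _) h1
  rw [map_smul, LinearMap.trace_id, smul_eq_mul] at h2
  rw [← h2]
  simp [Finsupp.sum, map_sum]

end finite

end CutAux
end

section
open MonoidAlgebra

namespace CutAux
section finite
variable {T : Type*} [Group T] [Finite T]

lemma int_of_rat {l : QQ} (q : ℚ) (hq : algebraMap ℚ QQ q = l) (hl : IsIntegral ℤ l) :
    ∃ z : ℤ, l = z := by
  subst hq
  rw [isIntegral_algebraMap_iff (algebraMap ℚ QQ).injective] at hl
  obtain ⟨z, rfl⟩ := IsIntegrallyClosed.isIntegral_iff.1 hl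
  exact ⟨z, by simp⟩

lemma map_central {v : MonoidAlgebra ℤ T} (hv : v ∈ Subring.center (MonoidAlgebra ℤ T))
    (x : MonoidAlgebra QQ T) :
    x * mapRingHom T (algebraMap ℤ QQ) v = mapRingHom T (algebraMap ℤ QQ) v * x := by
  induction x using MonoidAlgebra.induction_linear with
  | zero => simp
  | add x y hx hy => rw [add_mul, mul_add, hx, hy]
  | single t r =>
    have h1 : (single t r : MonoidAlgebra QQ T) =
        r • mapRingHom T (algebraMap ℤ QQ) (single t (1 : ℤ)) := by simp
    rw [h1, smul_mul_assoc, mul_smul_comm, ← map_mul, ← map_mul, Subring.mem_center_iff.1 hv]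

lemma eigen_rat {v : MonoidAlgebra ℤ T} (hv : v ∈ Subring.center (MonoidAlgebra ℤ T))
    (hp : ∀ j : ℕ, j.Coprime (Nat.card T) → ∀ x, v.coeff (x ^ j) = v.coeff x)
    (l : QQ) (m : MonoidAlgebra QQ T) (hm : m ≠ 0)
    (h : mapRingHom T (algebraMap ℤ QQ) v * m = l • m) : ∃ q : ℚ, algebraMap ℚ QQ q = l := by
  have : Fintype T := Fintype.ofFinite T
  have hn : 0 < Nat.card T := Nat.card_pos
  have hE := trace_eigen v (map_central hv) l
  rw [Finsupp.sum_fintype _ _ (by simp)] at hE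
  set d := Module.finrank QQ (eig (mapRingHom T (algebraMap ℤ QQ) v) l) with hd
  have hd0 : (d : QQ) ≠ 0 := by
    have : eig (mapRingHom T (algebraMap ℤ QQ) v) l ≠ ⊥ := by
      rw [Submodule.ne_bot_iff]
      exact ⟨m, by rw [Module.End.mem_eigenspace_iff]; exact h, hm⟩
    have h3 : d ≠ 0 := by
      intro h0
      exact this (Submodule.finrank_eq_zero.1 h0)
    exact_mod_cast h3
  have hfix : ∀ σ : QQ ≃ₐ[ℚ] QQ, σ l = l := by
    intro σ
    obtain ⟨j, hj, hσ⟩ := exists_power σ (Nat.card T) hn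
    have h2 : σ (l * d) = l * d := by
      rw [hE, map_sum]
      have hb : ∑ t : T, (v.coeff t : QQ) * LinearMap.trace QQ _ (eigRep _ (map_central hv) l t) =
          ∑ t : T, (v.coeff (t ^ j) : QQ) *
            LinearMap.trace QQ _ (eigRep _ (map_central hv) l (t ^ j)) :=
        (Equiv.sum_comp (powCoprime hj.symm) fun t => (v.coeff t : QQ) *
          LinearMap.trace QQ _ (eigRep _ (map_central hv) l t)).symm
      rw [hb]
      refine Finset.sum_congr rfl fun t _ => ?_
      rw [map_mul, map_intCast, hp j hj, map_pow]
      congr 1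
      refine map_trace (σ : QQ →+* QQ) hn hσ _ ?_
      rw [← map_pow, pow_card_eq_one', map_one]
    rw [map_mul, map_natCast] at h2
    exact mul_right_cancel₀ hd0 h2
  have : IsAlgClosure ℚ QQ := by
    have h0 : @IsAlgClosure ℚ QQ _ _ (AlgebraicClosure.instAlgebra ℚ) _ := inferInstance
    convert h0
    exact Subsingleton.elim _ _
  have : Normal ℚ QQ := IsAlgClosure.normal ℚ QQ
  have : IsGalois ℚ QQ := ⟨⟩
  have := (InfiniteGalois.mem_bot_iff_fixed (k := ℚ) (K := QQ) l).2 hfix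
  exact IntermediateField.mem_bot.1 this

lemma eigen_pm {v w : MonoidAlgebra ℤ T} (hv : v ∈ Subring.center (MonoidAlgebra ℤ T))
    (hvw : w * v = 1)
    (hp : ∀ j : ℕ, j.Coprime (Nat.card T) → ∀ x, v.coeff (x ^ j) = v.coeff x)
    (l : QQ) (m : MonoidAlgebra QQ T) (hm : m ≠ 0)
    (h : mapRingHom T (algebraMap ℤ QQ) v * m = l • m) : l ^ 2 = 1 := by
  obtain ⟨q, hq⟩ := eigen_rat hv hp l m hm h
  obtain ⟨z, hz⟩ := int_of_rat q hq (isIntegral_eigen v l m hm h)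
  have h1 : m = l • (mapRingHom T (algebraMap ℤ QQ) w * m) := by
    rw [← mul_smul_comm, ← h, ← mul_assoc, ← map_mul, hvw, map_one, one_mul]
  have hl : l ≠ 0 := by
    rintro rfl
    rw [zero_smul] at h1
    exact hm h1
  have h2 : mapRingHom T (algebraMap ℤ QQ) w * m = l⁻¹ • m := by
    conv_rhs => rw [h1]
    rw [smul_smul, inv_mul_cancel₀ hl, one_smul]
  obtain ⟨z', hz'⟩ := int_of_rat q⁻¹ (by rw [map_inv₀, hq]) (isIntegral_eigen w _ m hm h2)
  have h3 : z * z' = 1 := by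
    have : (z : QQ) * z' = 1 := by rw [← hz, ← hz', mul_inv_cancel₀ hl]
    exact_mod_cast this
  rw [hz]
  rcases Int.eq_one_or_neg_one_of_mul_eq_one h3 with rfl | rfl <;> simp

/-- Lemma B -/
lemma sq_eq_one_of_rational {v w : MonoidAlgebra ℤ T}
    (hv : v ∈ Subring.center (MonoidAlgebra ℤ T)) (hvw : w * v = 1)
    (hp : ∀ j : ℕ, j.Coprime (Nat.card T) → ∀ x, v.coeff (x ^ j) = v.coeff x)
    (hs : st v = v) : v * v = 1 := by
  set f : Module.End QQ (MonoidAlgebra QQ T) :=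
    LinearMap.mulLeft QQ (mapRingHom T (algebraMap ℤ QQ) v) with hf
  have hev : ∀ l, f.HasEigenvalue l → l ^ 2 = 1 := by
    intro l hl
    obtain ⟨m, hm⟩ := hl.exists_hasEigenvector
    exact eigen_pm hv hvw hp l m hm.2 (by simpa [hf] using hm.apply_eq_smul)
  have hnil : IsNilpotent (v * v - 1) := by
    have hfn : IsNilpotent (f ^ 2 - 1) := by
      have h1 : f.charpoly ∣ (Polynomial.X ^ 2 - 1) ^ f.charpoly.natDegree := by
        have hs := IsAlgClosed.splits f.charpoly
        have hc : (f.charpoly.roots.map fun a => Polynomial.X - Polynomial.C a).prod =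
            f.charpoly := by
          have := hs.eq_prod_roots
          rw [f.charpoly_monic.leadingCoeff, map_one, one_mul] at this
          exact this.symm
        have hcard : f.charpoly.natDegree = Multiset.card f.charpoly.roots :=
          hs.natDegree_eq_card_roots
        rw [hcard]
        have gen : ∀ s : Multiset QQ, (∀ a ∈ s, a ^ 2 = 1) →
            (s.map fun a => Polynomial.X - Polynomial.C a).prod ∣
              (Polynomial.X ^ 2 - 1) ^ Multiset.card s := by
          intro s
          induction s using Multiset.induction_on with
          | empty => simp
          | cons a s ih =>
            intro h
            rw [Multiset.map_cons, Multiset.prod_cons, Multiset.card_cons, pow_succ']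
            refine mul_dvd_mul ?_ (ih fun b hb => h b (Multiset.mem_cons_of_mem hb))
            rw [Polynomial.dvd_iff_isRoot]
            simp [h a (Multiset.mem_cons_self a s)]
        have h2 := gen f.charpoly.roots fun a ha => hev a
          (Module.End.hasEigenvalue_iff_isRoot_charpoly f a |>.2 (Polynomial.isRoot_of_mem_roots ha))
        rwa [hc] at h2
      obtain ⟨r, hr⟩ := h1
      refine ⟨f.charpoly.natDegree, ?_⟩
      have := congrArg (Polynomial.aeval f) hr
      simpa [LinearMap.aeval_self_charpoly] using this
    obtain ⟨N, hN⟩ := hfn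
    refine ⟨N, ?_⟩
    have h2 := congrArg (fun F : Module.End QQ (MonoidAlgebra QQ T) => F 1) hN
    have h3 : f ^ 2 - 1 = LinearMap.mulLeft QQ (mapRingHom T (algebraMap ℤ QQ) (v * v - 1)) := by
      ext x
      simp [hf, pow_two, sub_mul, mul_assoc]
    rw [h3, LinearMap.pow_mulLeft] at h2
    simp only [LinearMap.mulLeft_apply, mul_one, ← map_pow] at h2
    have hi : Function.Injective (mapRingHom T (algebraMap ℤ QQ)) :=
      map_injective (algebraMap ℤ QQ : ℤ →+ QQ) (RingHom.injective_int _)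
    apply hi
    rw [h2, map_zero]
    rfl
  have hself : ∀ x : MonoidAlgebra ℤ T, st x = x → IsNilpotent x → x = 0 := by
    have hst : ∀ (x : MonoidAlgebra ℤ T) n, st x = x → st (x ^ n) = x ^ n := by
      intro x n hx
      induction n with
      | zero => simp [st_one]
      | succ n ih => rw [pow_succ, st_mul, hx, ih, ← pow_succ, ← pow_succ']
    intro x hx hn
    obtain ⟨n, hn⟩ := hn
    have h2 : ∀ k : ℕ, x ^ (2 ^ k) = 0 → x = 0 := by
      intro k
      induction k with
      | zero => simp
      | succ k ih =>
        intro h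
        apply ih
        apply eq_zero_of_mul_st
        rw [hst _ _ hx, ← pow_two, ← pow_mul, ← pow_succ, h]
    refine h2 n ?_
    exact pow_eq_zero_of_le (Nat.lt_two_pow_self).le hn
  refine sub_eq_zero.1 (hself _ ?_ hnil)
  rw [st_sub, st_mul, hs, st_one]

end finite
end CutAux
end

section
open Monoid

namespace CutAux
section pushout
variable {A : Type*} [Group A] {𝒢 : Bool → Type*} [∀ i, Group (𝒢 i)] {φ : ∀ i, A →* 𝒢 i}

/-- elements represented by reduced words, with the indices of the first and last letters. -/
inductive RW (φ : ∀ i, A →* 𝒢 i) : Bool → Bool → PushoutI φ → Prop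
  | single (i : Bool) (g : 𝒢 i) (hg : g ∉ (φ i).range) : RW φ i i (PushoutI.of i g)
  | cons {i k l : Bool} {y : PushoutI φ} (g : 𝒢 i) (hg : g ∉ (φ i).range) (hik : i ≠ k)
      (hy : RW φ k l y) : RW φ i l (PushoutI.of i g * y)

lemma RW.append {i j k l : Bool} {x y : PushoutI φ} (hx : RW φ i j x) (hjk : j ≠ k)
    (hy : RW φ k l y) : RW φ i l (x * y) := by
  induction hx with
  | single i g hg => exact .cons g hg hjk hy
  | cons g hg hik hz ih =>
    rw [mul_assoc]
    exact .cons g hg hik (ih hjk)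

lemma RW.not_mem (hinj : ∀ i, Function.Injective (φ i)) {i j : Bool} {x : PushoutI φ}
    (h : RW φ i j x) : x ∉ (PushoutI.base φ).range := by
  have : ∃ w : CoprodI.NeWord 𝒢 i j, PushoutI.Reduced φ w.toWord ∧
      PushoutI.ofCoprodI w.prod = x := by
    induction h with
    | single i g hg =>
      refine ⟨.singleton g ?_, ?_, ?_⟩
      · rintro rfl
        exact hg (one_mem _)
      · intro p hp
        simp [CoprodI.NeWord.toWord] at hp
        subst hp
        exact hg
      · simp
    | cons g hg hik hy ih =>
      obtain ⟨w, hw, rfl⟩ := ih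
      refine ⟨.append (.singleton g ?_) hik w, ?_, ?_⟩
      · rintro rfl
        exact hg (one_mem _)
      swap
      · rw [CoprodI.NeWord.append_prod, CoprodI.NeWord.prod_singleton, map_mul,
          PushoutI.ofCoprodI_of]
      intro p hp
      have hp : p ∈ [⟨_, g⟩] ++ w.toList := hp
      rcases List.mem_append.1 hp with hp | hp
      · rw [List.mem_singleton] at hp
        subst hp
        exact hg
      · exact hw p hp
  obtain ⟨w, hw, rfl⟩ := this
  intro hm
  have := hw.eq_empty_of_mem_range hinj hm
  exact w.toList_ne_nil (congrArg CoprodI.Word.toList this)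

lemma RW.base_mul {i j : Bool} {x : PushoutI φ} (h : RW φ i j x) (a : A) :
    RW φ i j (PushoutI.base φ a * x) := by
  induction h with
  | single i g hg =>
    rw [← PushoutI.of_apply_eq_base φ i, ← map_mul]
    exact .single i _ fun h => hg ((Subgroup.mul_mem_cancel_left _ (MonoidHom.mem_range.2 ⟨a, rfl⟩)).1 h)
  | @cons i k l y g hg hik hy ih =>
    rw [← PushoutI.of_apply_eq_base φ i, ← mul_assoc, ← map_mul]
    exact .cons _ (fun h => hg ((Subgroup.mul_mem_cancel_left _ (MonoidHom.mem_range.2 ⟨a, rfl⟩)).1 h)) hik hy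

lemma RW.head {i l : Bool} {x : PushoutI φ} (h : RW φ i l x) :
    ∃ g : 𝒢 i, g ∉ (φ i).range ∧ (x = PushoutI.of i g ∨
      ∃ k y, i ≠ k ∧ RW φ k l y ∧ x = PushoutI.of i g * y) := by
  cases h with
  | single i g hg => exact ⟨g, hg, .inl rfl⟩
  | cons g hg hik hy => exact ⟨g, hg, .inr ⟨_, _, hik, hy, rfl⟩⟩

lemma RW.pow {i j : Bool} {x : PushoutI φ} (h : RW φ i j x) (hij : i ≠ j) (n : ℕ) :
    RW φ i j (x ^ (n + 1)) := by
  induction n with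
  | zero => simpa using h
  | succ n ih => rw [pow_succ]; exact .append ih hij.symm h

lemma RW.not_fin (hinj : ∀ i, Function.Injective (φ i)) {i j : Bool} {x : PushoutI φ}
    (h : RW φ i j x) (hij : i ≠ j) : ¬ IsOfFinOrder x := by
  intro hf
  obtain ⟨n, hn, h1⟩ := isOfFinOrder_iff_pow_eq_one.1 hf
  obtain ⟨m, rfl⟩ := Nat.exists_eq_succ_of_ne_zero hn.ne'
  have h2 := (h.pow hij m).not_mem hinj
  rw [Nat.succ_eq_add_one] at h1
  rw [h1] at h2
  exact h2 (one_mem _)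

lemma exists_RW (x : PushoutI φ) : x ∈ (PushoutI.base φ).range ∨ ∃ i j, RW φ i j x := by
  suffices H : ∀ z : PushoutI φ, ∀ x : PushoutI φ,
      (x ∈ (PushoutI.base φ).range ∨ ∃ i j, RW φ i j x) →
      (z * x ∈ (PushoutI.base φ).range ∨ ∃ i j, RW φ i j (z * x)) by
    simpa using H x 1 (.inl (one_mem _))
  intro z
  induction z using PushoutI.induction_on with
  | of i g =>
    intro x hx
    rcases hx with ⟨a, rfl⟩ | ⟨k, l, h⟩
    · rw [← PushoutI.of_apply_eq_base φ i, ← map_mul]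
      by_cases hg : g * φ i a ∈ (φ i).range
      · obtain ⟨b, hb⟩ := hg
        left
        exact ⟨b, by rw [← hb, PushoutI.of_apply_eq_base]⟩
      · exact .inr ⟨i, i, .single i _ hg⟩
    · by_cases hik : i = k
      · subst hik
        obtain ⟨g', hg', h⟩ := h.head
        by_cases hg : g * g' ∈ (φ i).range
        · obtain ⟨b, hb⟩ := hg
          have hb' := PushoutI.of_apply_eq_base φ i b
          rw [hb, map_mul] at hb'
          rcases h with rfl | ⟨k', y', hk, hy', rfl⟩
          · left
            exact ⟨b, hb'.symm⟩
          · right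
            rw [← mul_assoc, hb']
            exact ⟨_, _, hy'.base_mul b⟩
        · right
          rcases h with rfl | ⟨k', y', hk, hy', rfl⟩
          · rw [← map_mul]
            exact ⟨_, _, .single i _ hg⟩
          · rw [← mul_assoc, ← map_mul]
            exact ⟨_, _, .append (.single i _ hg) hk hy'⟩
      · by_cases hg : g ∈ (φ i).range
        · obtain ⟨a, rfl⟩ := hg
          rw [PushoutI.of_apply_eq_base]
          exact .inr ⟨_, _, h.base_mul a⟩
        · exact .inr ⟨_, _, .append (.single i g hg) hik h⟩
  | base a =>
    rintro x (hx | ⟨i, j, h⟩)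
    · exact .inl (mul_mem ⟨a, rfl⟩ hx)
    · exact .inr ⟨_, _, h.base_mul a⟩
  | mul x y hx hy =>
    intro z hz
    rw [mul_assoc]
    exact hx _ (hy _ hz)

/-- finite normal subgroups of an amalgam lie in the amalgamated subgroup. -/
lemma finite_normal_le (hinj : ∀ i, Function.Injective (φ i))
    (hproper : ∀ i, ¬ Function.Surjective (φ i)) (T : Subgroup (PushoutI φ)) [T.Normal]
    [Finite T] : T ≤ (PushoutI.base φ).range := by
  have hfin : ∀ t ∈ T, IsOfFinOrder t := fun t ht =>
    Submonoid.isOfFinOrder_coe.2 (isOfFinOrder_of_finite (⟨t, ht⟩ : T))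
  intro t ht
  by_contra hA
  obtain ⟨i, j, h⟩ := (exists_RW t).resolve_left hA
  by_cases hij : i = j
  · subst hij
    have := hproper (!i)
    rw [← MonoidHom.range_eq_top, Subgroup.eq_top_iff'] at this
    push Not at this
    obtain ⟨x, hx⟩ := this
    have hi : i ≠ !i := by simp
    have h1 : RW φ i (!i) (t * (PushoutI.of (!i) x * (t * PushoutI.of (!i) x⁻¹))) :=
      .append h hi (.append (.single _ x hx) hi.symm (.append h hi
        (.single _ x⁻¹ (by simpa using hx))))
    refine h1.not_fin hinj hi (hfin _ (mul_mem ht ?_))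
    rw [← mul_assoc, map_inv]
    exact Subgroup.Normal.conj_mem inferInstance t ht _
  · exact h.not_fin hinj hij (hfin t ht)

end pushout
end CutAux
end

section
open MonoidAlgebra
namespace CutAux
section key
variable {Γ : Type*} [Group Γ]

/-- inclusion of group rings -/
noncomputable def inc (N : Subgroup Γ) : MonoidAlgebra ℤ N →+* MonoidAlgebra ℤ Γ :=
  mapDomainRingHom ℤ N.subtype

lemma inc_single (N : Subgroup Γ) (g : N) (r : ℤ) : inc N (single g r) = single (g : Γ) r := by
  simp [inc]

lemma inc_coeff (N : Subgroup Γ) (x : MonoidAlgebra ℤ N) (g : N) :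
    (inc N x).coeff (g : Γ) = x.coeff g := by
  classical
  induction x using MonoidAlgebra.induction_linear with
  | zero => simp
  | add x y hx hy => simp [hx, hy]
  | single h r => simp [inc_single, Finsupp.single_apply]

lemma inc_coeff_of_notMem (N : Subgroup Γ) (x : MonoidAlgebra ℤ N) {g : Γ} (hg : g ∉ N) :
    (inc N x).coeff g = 0 := by
  classical
  induction x using MonoidAlgebra.induction_linear with
  | zero => simp
  | add x y hx hy => simp [hx, hy]
  | single h r =>
    have : (h : Γ) ≠ g := by
      rintro rfl
      exact hg h.2
    simp [inc_single, Finsupp.single_apply, this]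

lemma inc_injective (N : Subgroup Γ) : Function.Injective (inc N) := by
  intro x y h
  ext g
  rw [← inc_coeff, h, inc_coeff]

lemma inc_st (N : Subgroup Γ) (x : MonoidAlgebra ℤ N) : inc N (st x) = st (inc N x) := by
  induction x using MonoidAlgebra.induction_linear with
  | zero => simp [st_zero]
  | add x y hx hy => simp [st_add, hx, hy]
  | single h r => simp [inc_single, st_single]

lemma exists_inc (N : Subgroup Γ) (x : MonoidAlgebra ℤ Γ) (h : ∀ g, x.coeff g ≠ 0 → g ∈ N) :
    ∃ y, inc N y = x := by
  have : x ∈ (inc N).range := by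
    rw [← sum_coeff_single x]
    refine Subring.sum_mem _ fun g hg => ?_
    exact ⟨single ⟨g, h g (by simpa using hg)⟩ (x.coeff g), inc_single _ _ _⟩
  exact this

lemma inc_center (N : Subgroup Γ) {x : MonoidAlgebra ℤ N}
    (h : inc N x ∈ Subring.center (MonoidAlgebra ℤ Γ)) :
    x ∈ Subring.center (MonoidAlgebra ℤ N) := by
  rw [mem_center_iff] at *
  intro g k
  rw [← inc_coeff, ← inc_coeff, ← h (g : Γ) (k : Γ)]
  simp

lemma finite_conj {x : MonoidAlgebra ℤ Γ} (hx : x ∈ Subring.center (MonoidAlgebra ℤ Γ)) {s : Γ}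
    (hs : x.coeff s ≠ 0) : (Set.range fun h : Γ => h * s * h⁻¹).Finite := by
  refine (x.coeff.support.finite_toSet).subset ?_
  rintro _ ⟨h, rfl⟩
  simpa [mem_center_iff.1 hx] using hs

lemma torsion_supp {u w : MonoidAlgebra ℤ Γ} (hu : u ∈ Subring.center (MonoidAlgebra ℤ Γ))
    (hw : w ∈ Subring.center (MonoidAlgebra ℤ Γ)) (h : u * w = 1) {g : Γ}
    (hg : (u * st u).coeff g ≠ 0) : IsOfFinOrder g := by
  set S : Set Γ := {s | u.coeff s ≠ 0 ∨ w.coeff s ≠ 0} with hSd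
  have hS : S.Finite := by
    refine ((u.coeff.support.finite_toSet).union (w.coeff.support.finite_toSet)).subset ?_
    intro s hs
    simpa [hSd] using hs
  have hfc : ∀ s ∈ S, (Set.range fun h : Γ => h * s * h⁻¹).Finite := by
    rintro s (hs | hs)
    · exact finite_conj hu hs
    · exact finite_conj hw hs
  have h1 := finite_commutator_closure hS hfc
  have hfg : Group.FG (Subgroup.closure S) := by
    have : Finite S := hS
    exact Group.closure_finite_fg S
  obtain ⟨u', hu'⟩ := exists_inc (Subgroup.closure S) u
    fun g hg => Subgroup.subset_closure (Or.inl hg)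
  obtain ⟨w', hw'⟩ := exists_inc (Subgroup.closure S) w
    fun g hg => Subgroup.subset_closure (Or.inr hg)
  have h2 : u' * w' = 1 := by
    apply inc_injective
    rw [map_mul, hu', hw', h, map_one]
  rw [← hu', ← inc_st, ← map_mul] at hg
  have hgN : g ∈ Subgroup.closure S := by
    by_contra hgN
    exact hg (inc_coeff_of_notMem _ _ hgN)
  lift g to Subgroup.closure S using hgN
  rw [inc_coeff] at hg
  by_contra hn
  exact hg (mul_st_coeff_of_not_torsion (inc_center _ (by rwa [hu'])) (inc_center _ (by rwa [hw'])) h2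
    (by rwa [Submonoid.isOfFinOrder_coe] at hn))

theorem isCutGroup_of_RS
    (hT : ∀ T : Subgroup Γ, T.Normal → Finite T → ∀ x ∈ T, IsRSElement x) : IsCutGroup Γ := by
  intro u hu
  obtain ⟨u, w, huw, hwu⟩ := u
  simp only at hu ⊢
  have hw : w ∈ Subring.center (MonoidAlgebra ℤ Γ) := by
    rw [Subring.mem_center_iff] at *
    intro g
    calc g * w = w * (u * g) * w := by rw [← mul_assoc, hwu, one_mul]
      _ = w * g := by rw [← hu, mul_assoc, mul_assoc, huw, mul_one]
  have hcv : ∀ {x : MonoidAlgebra ℤ Γ}, x ∈ Subring.center (MonoidAlgebra ℤ Γ) →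
      x * st x ∈ Subring.center (MonoidAlgebra ℤ Γ) := fun hx => mul_mem hx (st_mem_center hx)
  have hst : ∀ x : MonoidAlgebra ℤ Γ, st (x * st x) = x * st x := by
    intro x
    rw [st_mul, st_st]
  set v := u * st u with hv
  set z := w * st w with hz
  have hzv : z * v = 1 := by
    rw [hz, hv, mul_assoc, ← mul_assoc (st w), Subring.mem_center_iff.1 hu (st w), mul_assoc u,
      ← st_mul, huw, st_one, mul_one, hwu]
  set S : Set Γ := {s | v.coeff s ≠ 0 ∨ z.coeff s ≠ 0} with hSd
  have hS : S.Finite := by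
    refine ((v.coeff.support.finite_toSet).union (z.coeff.support.finite_toSet)).subset ?_
    intro s hs
    simpa [hSd] using hs
  have hfc : ∀ s ∈ S, (Set.range fun h : Γ => h * s * h⁻¹).Finite := by
    rintro s (hs | hs)
    · exact finite_conj (hcv hu) hs
    · exact finite_conj (hcv hw) hs
  have hfin : Finite (Subgroup.closure S) := by
    refine finite_closure hS hfc ?_
    rintro s (hs | hs)
    · exact torsion_supp hu hw huw hs
    · exact torsion_supp hw hu hwu hs
  have hnorm : (Subgroup.closure S).Normal := by
    have : Subgroup.closure S = Subgroup.normalClosure S := by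
      refine le_antisymm Subgroup.closure_le_normalClosure ?_
      refine Subgroup.closure_mono ?_
      intro s hs
      obtain ⟨t, ht, hts⟩ := Group.mem_conjugatesOfSet_iff.1 hs
      obtain ⟨c, rfl⟩ := isConj_iff.1 hts
      rcases ht with ht | ht
      · left
        rwa [mem_center_iff.1 (hcv hu)]
      · right
        rwa [mem_center_iff.1 (hcv hw)]
    rw [this]
    infer_instance
  have hRS := hT _ hnorm hfin
  obtain ⟨v', hv'⟩ := exists_inc (Subgroup.closure S) v
    fun g hg => Subgroup.subset_closure (Or.inl hg)
  obtain ⟨z', hz'⟩ := exists_inc (Subgroup.closure S) z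
    fun g hg => Subgroup.subset_closure (Or.inr hg)
  have hv'c := inc_center (Subgroup.closure S) (x := v') (by rw [hv']; exact hcv hu)
  have hzv' : z' * v' = 1 := by
    apply inc_injective
    rw [map_mul, hv', hz', hzv, map_one]
  have hstv' : st v' = v' := by
    apply inc_injective
    rw [inc_st, hv', hst]
  have hconj : ∀ {x y : Γ}, IsConj x y → v.coeff x = v.coeff y := by
    intro x y h
    obtain ⟨c, rfl⟩ := isConj_iff.1 h
    rw [mem_center_iff.1 (hcv hu)]
  have hinv : ∀ x : Γ, v.coeff x⁻¹ = v.coeff x := by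
    intro x
    rw [← st_coeff, hst]
  have hv2 : v' * v' = 1 := by
    refine sq_eq_one_of_rational hv'c hzv' ?_ hstv'
    intro j hj x
    rcases Nat.eq_zero_or_pos j with rfl | hj0
    · have h1 : Nat.card (Subgroup.closure S) = 1 := by simpa using hj
      have := (Nat.card_eq_one_iff_unique.1 h1).1
      congr 1
      exact Subsingleton.elim _ _
    · rw [← inc_coeff, ← inc_coeff, hv', Subgroup.coe_pow]
      have hj1 : j.Coprime (orderOf (x : Γ)) := by
        rw [Subgroup.orderOf_coe]
        exact hj.coprime_dvd_right (orderOf_dvd_natCard x)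
      rcases hRS x x.2 j hj0 hj1 with h | h
      · exact hconj h
      · rw [hconj h, hinv]
  have hvv : v * v = 1 := by rw [← hv', ← map_mul, hv2, map_one]
  have hpos : 0 < v.coeff 1 := by
    rw [hv, mul_st_coeff_one]
    refine Finset.sum_pos (fun g hg => ?_) ?_
    · have : u.coeff g ≠ 0 := by simpa using hg
      positivity
    · rw [Finsupp.support_nonempty_iff]
      intro h0
      have hu0 : u = 0 := by simpa using h0
      rw [hu0, zero_mul] at huw
      have := congrArg (fun y => y.coeff (1 : Γ)) huw
      simp at this
  have hv1 : v = 1 := by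
    classical
    obtain ⟨g, hg | hg⟩ := trivial_of_mul_st (x := v) (by rw [hst, hvv])
    · rw [hg, of_apply, coeff_single, Finsupp.single_apply] at hpos
      split_ifs at hpos with h1
      · rw [hg, h1, map_one]
      · simp at hpos
    · rw [hg, of_apply, coeff_neg, Finsupp.neg_apply, coeff_single, Finsupp.single_apply] at hpos
      split_ifs at hpos <;> simp at hpos
  exact trivial_of_mul_st (by rw [← hv, hv1])

end key

section final
variable {A : Type*} [Group A] {𝒢 : Bool → Type*} [∀ i, Group (𝒢 i)]
open Monoid

theorem amalgam_aux (φ : ∀ i, A →* 𝒢 i)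
    (hinj : ∀ i, Function.Injective (φ i))
    (hproper : ∀ i, ¬ Function.Surjective (φ i))
    (i : Bool) (hRS : IsRSSubgroup (φ i).range) : IsCutGroup (PushoutI φ) := by
  refine isCutGroup_of_RS fun T hN hF x hx => ?_
  have hfin : IsOfFinOrder x := Submonoid.isOfFinOrder_coe.2 (isOfFinOrder_of_finite (⟨x, hx⟩ : T))
  obtain ⟨a, rfl⟩ := finite_normal_le hinj hproper T hx
  rw [← PushoutI.of_apply_eq_base φ i] at *
  have hi := PushoutI.of_injective hinj i
  intro j hj hc
  rw [orderOf_injective _ hi] at hc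
  have h1 := hRS (φ i a) ⟨a, rfl⟩ (hi.isOfFinOrder_iff.1 hfin) j hj hc
  rw [← map_pow, ← map_inv]
  exact h1.imp (fun h => (PushoutI.of i).map_isConj h) (fun h => (PushoutI.of i).map_isConj h)

end final
end CutAux
end

theorem isCutGroup_amalgam {A : Type*} [Group A] {𝒢 : Bool → Type*} [∀ i, Group (𝒢 i)]
    (φ : ∀ i, A →* 𝒢 i)
    (hinj : ∀ i, Function.Injective (φ i))
    (hproper : ∀ i, ¬ Function.Surjective (φ i))
    (hRS : IsRSSubgroup (φ false).range ∨ IsRSSubgroup (φ true).range) :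
    IsCutGroup (Monoid.PushoutI φ) := by
  rcases hRS with h | h
  · exact CutAux.amalgam_aux φ hinj hproper _ h
  · exact CutAux.amalgam_aux φ hinj hproper _ h
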